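/- Let β1 > 4 be an integer, χ = β1 − 1, π5 > 0 a real, and ε a real with 0 < ε < √β1/2; set u1⁻ = (β1 − √β1)/2, u_⊙ = β1/2 − ε, Ψ2(u1) = (1/2)(u1² − u1 + χ/4), g_s = 4·(3β1/(4(β1−1)))^{1/4}·π5^{1/4}, A = 2/(β1(β1−1)), B = 1/β1, C = (β1−2)(β1−3)/2, D = β1² − 5β1 + 7, J(g) = χ(χ−1)(4χ−7)/32 + 6π5/g⁴, and Φ(u1,u2) = A·u2² − 2B·u1·u2 − C·u1² + D·u2 + C·u1. If 0 < g < g_s, then there exist reals u1 and u2 with u1⁻ < u1 < u_⊙ and u2 > Ψ2(u1) such that Φ(u1,u2) ≤ J(g). -/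

import Mathlib

/-!
At the corner `(u⁻, Ψ₂(u⁻))` of the region `u₁ > u⁻`, `u₂ > Ψ₂(u₁)`, the form `Φ` exceeds the
constant part of `J(g)` by exactly `(β - 1) / (32 β)`, and `6 π₅ / g⁴` is larger than this excess
precisely when `g < g_s`. Hence `Φ < J(g)` holds at the corner, so by continuity it holds on a
neighbourhood of it, which meets the region at points with `u₁` arbitrarily close to `u⁻`.
-/

open Filter Set Topology

/-- The quadratic form `Φ(u₁, u₂)` of the master inequality, for a real first Betti number `β`,
with the coefficients `A`, `B`, `C`, `D` written out. -/
noncomputable def masterForm (β u₁ u₂ : ℝ) : ℝ :=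
  2 / (β * (β - 1)) * u₂ ^ 2 - 2 * (1 / β) * u₁ * u₂ - (β - 2) * (β - 3) / 2 * u₁ ^ 2
    + (β ^ 2 - 5 * β + 7) * u₂ + (β - 2) * (β - 3) / 2 * u₁

/-- The right-hand side `J(g)` of the master inequality; `χ` is written out as `β - 1`. -/
noncomputable def masterBound (β π5 g : ℝ) : ℝ :=
  (β - 1) * (β - 1 - 1) * (4 * (β - 1) - 7) / 32 + 6 * π5 / g ^ 4

/-- The function `Ψ₂` of the necessary bound `u₂ ≤ Ψ₂(u₁)` of Lemma 2; `χ` is written out as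
`β - 1`. -/
noncomputable def upperParabola (β u₁ : ℝ) : ℝ :=
  1 / 2 * (u₁ ^ 2 - u₁ + (β - 1) / 4)

/-- The left endpoint `u₁⁻` of the range of `u₁` in which the master inequality and the bound of
Lemma 2 are compared. -/
noncomputable def leftEndpoint (β : ℝ) : ℝ :=
  (β - √β) / 2

/-- The lower bound `g_s` of Theorem 1 for the scale `g`. It is meaningful for `β > 1` and
`π5 ≥ 0`, where the fourth roots have nonnegative radicands. -/
noncomputable def scaleThreshold (β π5 : ℝ) : ℝ :=
  4 * (3 * β / (4 * (β - 1))) ^ ((1 : ℝ) / 4) * π5 ^ ((1 : ℝ) / 4)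

theorem continuous_masterForm (β : ℝ) : Continuous fun p : ℝ × ℝ ↦ masterForm β p.1 p.2 := by
  unfold masterForm
  fun_prop

theorem continuous_upperParabola (β : ℝ) : Continuous (upperParabola β) := by
  unfold upperParabola
  fun_prop

theorem exists_mem_Ioo_exists_gt_of_eventually_nhds_graph {α γ : Type*}
    [LinearOrder α] [TopologicalSpace α] [OrderTopology α] [DenselyOrdered α]
    [LinearOrder γ] [TopologicalSpace γ] [OrderTopology γ] [DenselyOrdered γ] [NoMaxOrder γ]
    {ψ : α → γ} {a b : α} {P : α × γ → Prop} (hψ : ContinuousAt ψ a) (hab : a < b)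
    (hP : ∀ᶠ p in 𝓝 (a, ψ a), P p) :
    ∃ x ∈ Ioo a b, ∃ y > ψ x, P (x, y) := by
  have hgraph : ∀ᶠ x in 𝓝 a, ∀ᶠ p in 𝓝 (x, ψ x), P p :=
    (continuousAt_id.prodMk hψ).eventually hP.eventually_nhds
  have : (𝓝[>] a).NeBot := nhdsGT_neBot_of_exists_gt ⟨b, hab⟩
  obtain ⟨x, hx, hxab⟩ :=
    ((hgraph.filter_mono nhdsWithin_le_nhds).and (Ioo_mem_nhdsGT hab)).exists
  have hfiber : ∀ᶠ y in 𝓝 (ψ x), P (x, y) :=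
    (Continuous.prodMk_right x).continuousAt.eventually hx
  obtain ⟨y, hy, hψy⟩ :=
    ((hfiber.filter_mono nhdsWithin_le_nhds).and (self_mem_nhdsWithin (s := Ioi (ψ x)))).exists
  exact ⟨x, hxab, y, hψy, hy⟩

theorem masterForm_leftEndpoint_upperParabola {β : ℝ} (hβ : 0 < β) (hβ1 : β ≠ 1) :
    masterForm β (leftEndpoint β) (upperParabola β (leftEndpoint β)) =
      (β - 1) * (β - 1 - 1) * (4 * (β - 1) - 7) / 32 + (β - 1) / (32 * β) := by
  obtain ⟨s, hs, rfl⟩ : ∃ s : ℝ, 0 < s ∧ s ^ 2 = β := ⟨√β, Real.sqrt_pos.2 hβ, Real.sq_sqrt hβ.le⟩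
  have hs1 : s ^ 2 - 1 ≠ 0 := sub_ne_zero.2 hβ1
  simp only [masterForm, upperParabola, leftEndpoint, Real.sqrt_sq hs.le]
  field_simp
  ring

theorem scaleThreshold_nonneg {β π5 : ℝ} (hβ : 1 < β) (hπ5 : 0 ≤ π5) :
    0 ≤ scaleThreshold β π5 := by
  have : 0 < β - 1 := sub_pos.2 hβ
  unfold scaleThreshold
  positivity

theorem scaleThreshold_pow_four {β π5 : ℝ} (hβ : 1 < β) (hπ5 : 0 ≤ π5) :
    scaleThreshold β π5 ^ 4 = 192 * β * π5 / (β - 1) := by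
  have hroot {x : ℝ} (hx : 0 ≤ x) : (x ^ ((1 : ℝ) / 4)) ^ 4 = x := by
    simpa only [one_div, Nat.cast_ofNat] using Real.rpow_inv_natCast_pow hx four_ne_zero
  have hχ : 0 < β - 1 := sub_pos.2 hβ
  rw [scaleThreshold, mul_pow, mul_pow, hroot (by positivity), hroot hπ5]
  field_simp
  ring

theorem masterForm_leftEndpoint_upperParabola_lt_masterBound_iff {β π5 g : ℝ}
    (hβ : 1 < β) (hπ5 : 0 ≤ π5) (hg : 0 < g) :
    masterForm β (leftEndpoint β) (upperParabola β (leftEndpoint β)) < masterBound β π5 g ↔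
      g < scaleThreshold β π5 := by
  have hβ0 : 0 < β := zero_lt_one.trans hβ
  rw [masterForm_leftEndpoint_upperParabola hβ0 hβ.ne', masterBound, add_lt_add_iff_left,
    ← pow_lt_pow_iff_left₀ hg.le (scaleThreshold_nonneg hβ hπ5) four_ne_zero,
    scaleThreshold_pow_four hβ hπ5, div_lt_div_iff₀ (by positivity) (by positivity),
    lt_div_iff₀ (sub_pos.2 hβ)]
  constructor <;> intro h <;> linarith

theorem stmt_9_general {β π5 ε g : ℝ} (hβ : 1 < β) (hπ5 : 0 ≤ π5) (hε : ε < √β / 2)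
    (hg : 0 < g) (hgs : g < scaleThreshold β π5) :
    ∃ u₁ u₂ : ℝ, leftEndpoint β < u₁ ∧ u₁ < β / 2 - ε ∧ upperParabola β u₁ < u₂ ∧
      masterForm β u₁ u₂ ≤ masterBound β π5 g := by
  have hcorner := (masterForm_leftEndpoint_upperParabola_lt_masterBound_iff hβ hπ5 hg).2 hgs
  have hnear : ∀ᶠ p : ℝ × ℝ in 𝓝 (leftEndpoint β, upperParabola β (leftEndpoint β)),
      masterForm β p.1 p.2 < masterBound β π5 g :=
    (continuous_masterForm β).continuousAt.eventually_lt continuousAt_const hcorner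
  have hrange : leftEndpoint β < β / 2 - ε := by
    unfold leftEndpoint
    linarith
  obtain ⟨u₁, ⟨hleft, hright⟩, u₂, habove, hlt⟩ :=
    exists_mem_Ioo_exists_gt_of_eventually_nhds_graph
      (continuous_upperParabola β).continuousAt hrange hnear
  exact ⟨u₁, u₂, hleft, hright, habove, hlt.le⟩

/-- Analytic content of Theorem 1: if 0 < g < g_s then the master inequality
Φ(u1,u2) ≤ J(g) admits points (u1,u2) with u1⁻ < u1 < u_⊙ and u2 > Ψ2(u1). -/
theorem stmt_9 (β1 : ℕ) (hβ1 : 4 < β1)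
    (π5 ε g : ℝ) (hπ5 : 0 < π5) (hε1 : 0 < ε) (hε2 : ε < Real.sqrt β1 / 2)
    (χ A B C D u1m gs J : ℝ)
    (hχ : χ = (β1 : ℝ) - 1)
    (hA : A = 2 / ((β1 : ℝ) * ((β1 : ℝ) - 1)))
    (hB : B = 1 / (β1 : ℝ))
    (hC : C = ((β1 : ℝ) - 2) * ((β1 : ℝ) - 3) / 2)
    (hD : D = (β1 : ℝ) ^ 2 - 5 * (β1 : ℝ) + 7)
    (hu1m : u1m = ((β1 : ℝ) - Real.sqrt β1) / 2)
    (hgs : gs = 4 * (3 * (β1 : ℝ) / (4 * ((β1 : ℝ) - 1))) ^ ((1 : ℝ) / 4)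
      * π5 ^ ((1 : ℝ) / 4))
    (hJ : J = χ * (χ - 1) * (4 * χ - 7) / 32 + 6 * π5 / g ^ 4)
    (Ψ2 : ℝ → ℝ) (hΨ2 : ∀ u1, Ψ2 u1 = (1 / 2) * (u1 ^ 2 - u1 + χ / 4))
    (hg0 : 0 < g) (hggs : g < gs) :
    ∃ u1 u2 : ℝ, u1m < u1 ∧ u1 < (β1 : ℝ) / 2 - ε ∧ Ψ2 u1 < u2 ∧
      A * u2 ^ 2 - 2 * B * u1 * u2 - C * u1 ^ 2 + D * u2 + C * u1 ≤ J := by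
  obtain rfl : Ψ2 = _ := funext hΨ2
  subst hχ hA hB hC hD hu1m hgs hJ
  exact stmt_9_general (Nat.one_lt_cast.2 (by omega)) hπ5.le hε2 hg0 hggs
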